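/- Let Ω ⊂ ℝ^n be a bounded domain with C¹ boundary, s ∈ (0,1), and v_0 ∈ C(ℝ^n). Define v : ℝ^n → ℝ by v(x) := v_0(x) for x ∈ closure(Ω) and v(x) := (∫_Ω v_0(y)|x−y|^{−n−2s} dy)/(∫_Ω |x−y|^{−n−2s} dy) for x ∈ ℝ^n\closure(Ω). Then v is continuous on ℝ^n, v = v_0 on closure(Ω), and N_s v(x) = 0 for every x ∈ ℝ^n\closure(Ω). -/

import Mathlib

/-!
The only delicate point is continuity at a boundary point `p`.  There
`v x - v0 p` is the average of `v0 y - v0 p` over `y ∈ Ω` with weight `|x - y|^{-n-2s}`.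
The part of `Ω` near `p` contributes little because `v0` is continuous; the part away from `p`
contributes a bounded amount to the numerator, so it suffices that the total weight
`∫_Ω |x - y|^{-n-2s} dy` blows up as `x → p` (`weight_blowup`).

The blow-up follows from an interior corkscrew condition (`exists_corkscrew`): since `Ω` is locally
the subgraph of a `C¹`, hence locally Lipschitz, function, `Ω ∩ B(p, ρ)` contains a ball of radius
`κ ρ` for every small `ρ`, with `κ` independent of `ρ`.  For `|x - p| < ρ` this ball alone carries
weight at least `(2ρ)^{-n-2s} |B(0, κρ)| = c ρ^{-2s}`.

Away from `closure Ω` the weight is bounded on `Ω`, so continuity is dominated convergence, and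
`N_s v = 0` is the definition of `v` after multiplying by the total weight.
-/

open MeasureTheory Filter Set Bornology
open scoped Topology ENNReal NNReal Pointwise symmDiff

noncomputable section

/-- `ℝ^n` as a Euclidean space. -/
abbrev En (n : ℕ) := EuclideanSpace ℝ (Fin n)

/-- The normalization constant `c_{n,s}` of the fractional Laplacian. -/
def cns (n : ℕ) (s : ℝ) : ℝ :=
  4 ^ s * Real.Gamma ((n : ℝ) / 2 + s) / (Real.pi ^ ((n : ℝ) / 2) * |Real.Gamma (-s)|)

/-- `Q(Ω) = ℝ^{2n} \ (CΩ × CΩ)`. -/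
def Qset (n : ℕ) (Ω : Set (En n)) : Set (En n × En n) := (Ωᶜ ×ˢ Ωᶜ)ᶜ

/-- The kernel `|x-y|^{n+2s}`. -/
def nsKer (n : ℕ) (s : ℝ) (x y : En n) : ℝ := dist x y ^ ((n : ℝ) + 2 * s)

/-- The nonlocal normal derivative `N_s u (x) = c_{n,s} ∫_Ω (u x - u y)/|x-y|^{n+2s} dy`. -/
def NsD (n : ℕ) (s : ℝ) (Ω : Set (En n)) (u : En n → ℝ) (x : En n) : ℝ :=
  cns n s * ∫ y in Ω, (u x - u y) / nsKer n s x y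

/-- The renormalized nonlocal normal derivative `Ñ_s u`. -/
def NsTilde (n : ℕ) (s : ℝ) (Ω : Set (En n)) (u : En n → ℝ) (x : En n) : ℝ :=
  NsD n s Ω u x / (cns n s * ∫ y in Ω, (nsKer n s x y)⁻¹)

/-- The fractional Laplacian `(-Δ)^s u (x)`, defined as a principal value. -/
def fracLap (n : ℕ) (s : ℝ) (u : En n → ℝ) (x : En n) : ℝ :=
  cns n s * limUnder (𝓝[>] (0 : ℝ))
    (fun ε => ∫ y in {y : En n | ε ≤ dist x y}, (u x - u y) / nsKer n s x y)

/-- The Gagliardo-type bilinear form over `Q(Ω)`. -/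
def gagliardo2 (n : ℕ) (s : ℝ) (Ω : Set (En n)) (u v : En n → ℝ) : ℝ :=
  ∫ p in Qset n Ω, (u p.1 - u p.2) * (v p.1 - v p.2) / nsKer n s p.1 p.2

/-- Membership in the space `H^s_{Ω,g}`. -/
def InHs (n : ℕ) (s : ℝ) (Ω : Set (En n)) (g : En n → ℝ) (u : En n → ℝ) : Prop :=
  Measurable u ∧
  IntegrableOn (fun x => u x ^ 2) Ω ∧
  IntegrableOn (fun x => |g x| * u x ^ 2) Ωᶜ ∧
  IntegrableOn (fun p : En n × En n => (u p.1 - u p.2) ^ 2 / nsKer n s p.1 p.2) (Qset n Ω)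

/-- The squared norm of `H^s_{Ω,g}`. -/
def hsNormSq (n : ℕ) (s : ℝ) (Ω : Set (En n)) (g : En n → ℝ) (u : En n → ℝ) : ℝ :=
  (∫ x in Ω, u x ^ 2) + (∫ x in Ωᶜ, |g x| * u x ^ 2) + gagliardo2 n s Ω u u

/-- The scalar product of `H^s_{Ω,g}`. -/
def hsInner (n : ℕ) (s : ℝ) (Ω : Set (En n)) (g : En n → ℝ) (u v : En n → ℝ) : ℝ :=
  (∫ x in Ω, u x * v x) + (∫ x in Ωᶜ, |g x| * (u x * v x)) + gagliardo2 n s Ω u v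

/-- `u` is a weak solution of `(-Δ)^s u = f` in `Ω`, `N_s u = g` in `ℝ^n \ Ω̄`. -/
def IsWeakSol (n : ℕ) (s : ℝ) (Ω : Set (En n)) (f g : En n → ℝ) (u : En n → ℝ) : Prop :=
  InHs n s Ω (fun _ => 0) u ∧
  ∀ v : En n → ℝ, InHs n s Ω g v →
    cns n s / 2 * gagliardo2 n s Ω u v = (∫ x in Ω, f x * v x) + ∫ x in Ωᶜ, g x * v x

/-- Last coordinate of a point of `ℝ^n`. -/
def lastCoord {n : ℕ} (x : En n) : ℝ :=
  if h : 0 < n then x ⟨n - 1, Nat.sub_lt h Nat.one_pos⟩ else 0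

/-- The first `n-1` coordinates of a point of `ℝ^n`. -/
def frontCoords {n : ℕ} (x : En n) : EuclideanSpace ℝ (Fin (n - 1)) :=
  (WithLp.equiv 2 (Fin (n - 1) → ℝ)).symm fun i => x (Fin.castLE (Nat.sub_le n 1) i)

/-- A bounded Lipschitz domain: open, bounded, nonempty, and near each boundary point the
domain is (up to a rigid motion) the subgraph of a Lipschitz function. -/
def IsLipschitzDomain (n : ℕ) (Ω : Set (En n)) : Prop :=
  IsOpen Ω ∧ IsBounded Ω ∧ Ω.Nonempty ∧
  ∀ p ∈ frontier Ω, ∃ (φ : En n ≃ᵢ En n) (γ : EuclideanSpace ℝ (Fin (n - 1)) → ℝ)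
    (L : ℝ≥0) (r : ℝ), 0 < r ∧ LipschitzWith L γ ∧ φ p = 0 ∧
    (φ '' Ω) ∩ Metric.ball 0 r = {x : En n | lastCoord x < γ (frontCoords x)} ∩ Metric.ball 0 r

/-- A bounded domain with `C¹` boundary. -/
def IsC1Domain (n : ℕ) (Ω : Set (En n)) : Prop :=
  IsOpen Ω ∧ IsBounded Ω ∧ Ω.Nonempty ∧
  ∀ p ∈ frontier Ω, ∃ (φ : En n ≃ᵢ En n) (γ : EuclideanSpace ℝ (Fin (n - 1)) → ℝ)
    (r : ℝ), 0 < r ∧ ContDiff ℝ 1 γ ∧ φ p = 0 ∧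
    (φ '' Ω) ∩ Metric.ball 0 r = {x : En n | lastCoord x < γ (frontCoords x)} ∩ Metric.ball 0 r

/-- The Laplacian `Δu = ∑ ∂²u/∂xᵢ²`. -/
def lapl {n : ℕ} (u : En n → ℝ) (x : En n) : ℝ :=
  ∑ i : Fin n,
    fderiv ℝ (fun y => fderiv ℝ u y (EuclideanSpace.single i (1 : ℝ))) x
      (EuclideanSpace.single i (1 : ℝ))

/-- The surface measure `ω_{n-1}` of the unit sphere of `ℝ^n`. -/
def sphereSurf (n : ℕ) : ℝ := n * (volume (Metric.ball (0 : En n) 1)).toReal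

/-- The unit vector `e_n`. -/
def eLast (n : ℕ) : En n :=
  if h : 0 < n then EuclideanSpace.single (⟨n - 1, Nat.sub_lt h Nat.one_pos⟩ : Fin n) (1 : ℝ)
  else 0

/-- The halfspace `Π = {x_n < 0}`. -/
def halfSpaceNeg (n : ℕ) : Set (En n) := {x : En n | lastCoord x < 0}

end

/-! ### The weight away from the closure of the domain -/

lemma nsKer_nonneg (n : ℕ) (s : ℝ) (x y : En n) : 0 ≤ nsKer n s x y :=
  Real.rpow_nonneg dist_nonneg _

lemma inv_nsKer_le {n : ℕ} {s : ℝ} (hs : 0 < s) {x y : En n} {d : ℝ} (hd : 0 < d)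
    (h : d ≤ dist x y) : (nsKer n s x y)⁻¹ ≤ (d ^ ((n : ℝ) + 2 * s))⁻¹ := by
  unfold nsKer
  have : 0 < d ^ ((n : ℝ) + 2 * s) := Real.rpow_pos_of_pos hd _
  gcongr

lemma measurable_inv_nsKer (n : ℕ) (s : ℝ) (x : En n) :
    Measurable fun y => (nsKer n s x y)⁻¹ := by
  unfold nsKer
  exact ((measurable_const.dist measurable_id).pow_const _).inv

lemma exists_dist_ge {n : ℕ} {Ω : Set (En n)} {x : En n} (hx : x ∉ closure Ω) :
    ∃ d > 0, ∀ y ∈ Ω, d ≤ dist x y := by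
  rw [Metric.mem_closure_iff] at hx
  push Not at hx
  exact hx

lemma exists_bound {n : ℕ} {Ω : Set (En n)} (hb : IsBounded Ω) {g : En n → ℝ}
    (hg : Continuous g) : ∃ M, 0 ≤ M ∧ ∀ y ∈ Ω, |g y| ≤ M := by
  obtain ⟨M, hM⟩ := hb.isCompact_closure.exists_bound_of_continuousOn hg.continuousOn
  refine ⟨max M 0, le_max_right _ _, fun y hy => ?_⟩
  exact (hM y (subset_closure hy)).trans (le_max_left _ _)

lemma integrableOn_weight {n : ℕ} {s : ℝ} (hs : 0 < s) {Ω : Set (En n)} (ho : IsOpen Ω)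
    (hb : IsBounded Ω) {g : En n → ℝ} (hg : Continuous g) {x : En n} (hx : x ∉ closure Ω) :
    IntegrableOn (fun y => g y * (nsKer n s x y)⁻¹) Ω := by
  obtain ⟨d, hd, hdy⟩ := exists_dist_ge hx
  obtain ⟨M, hM0, hM⟩ := exists_bound hb hg
  refine Measure.integrableOn_of_bounded (M := M * (d ^ ((n : ℝ) + 2 * s))⁻¹)
    hb.measure_lt_top.ne
    (hg.measurable.mul (measurable_inv_nsKer n s x)).aestronglyMeasurable ?_
  filter_upwards [ae_restrict_mem ho.measurableSet] with y hy
  rw [Real.norm_eq_abs, abs_mul, abs_of_nonneg (inv_nonneg.2 (nsKer_nonneg n s x y))]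
  exact mul_le_mul (hM y hy) (inv_nsKer_le hs hd (hdy y hy))
    (inv_nonneg.2 (nsKer_nonneg n s x y)) hM0

lemma integrableOn_inv_nsKer {n : ℕ} {s : ℝ} (hs : 0 < s) {Ω : Set (En n)} (ho : IsOpen Ω)
    (hb : IsBounded Ω) {x : En n} (hx : x ∉ closure Ω) :
    IntegrableOn (fun y => (nsKer n s x y)⁻¹) Ω := by
  simpa using integrableOn_weight hs ho hb (g := fun _ => (1 : ℝ)) continuous_const hx

/-- A ball inside `Ω` all of whose points are within distance `R` of `x` bounds the total weight
from below. -/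
lemma weight_lower {n : ℕ} {s : ℝ} (hs : 0 < s) {Ω : Set (En n)} (ho : IsOpen Ω)
    (hb : IsBounded Ω) {x : En n} (hx : x ∉ closure Ω) {z : En n} {t R : ℝ} (ht : 0 < t)
    (hz : Metric.ball z t ⊆ Ω) (hR : ∀ y ∈ Metric.ball z t, dist x y ≤ R) :
    (R ^ ((n : ℝ) + 2 * s))⁻¹ * (t ^ n * volume.real (Metric.ball (0 : En n) 1))
      ≤ ∫ y in Ω, (nsKer n s x y)⁻¹ := by
  have hvol : volume.real (Metric.ball z t) = t ^ n * volume.real (Metric.ball (0 : En n) 1) := by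
    rw [measureReal_def, Measure.addHaar_ball_of_pos volume z ht, ENNReal.toReal_mul,
      ENNReal.toReal_ofReal (by positivity), finrank_euclideanSpace_fin, measureReal_def]
  have hint := integrableOn_inv_nsKer hs ho hb hx
  obtain ⟨d, hd, hdy⟩ := exists_dist_ge hx
  calc _ = ∫ y in Metric.ball z t, (R ^ ((n : ℝ) + 2 * s))⁻¹ := by
        rw [setIntegral_const, hvol, smul_eq_mul, mul_comm]
    _ ≤ ∫ y in Metric.ball z t, (nsKer n s x y)⁻¹ := by
        refine setIntegral_mono_on (integrableOn_const Metric.isBounded_ball.measure_lt_top.ne)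
          (hint.mono_set hz) measurableSet_ball fun y hy => ?_
        have h0 : 0 < dist x y := hd.trans_le (hdy y (hz hy))
        have := hR y hy
        unfold nsKer
        have : 0 < dist x y ^ ((n : ℝ) + 2 * s) := Real.rpow_pos_of_pos h0 _
        gcongr
    _ ≤ _ := by
        refine setIntegral_mono_set hint ?_ (Eventually.of_forall hz)
        exact Eventually.of_forall fun y => inv_nonneg.2 (nsKer_nonneg n s x y)

lemma volume_unitBall_pos (n : ℕ) : 0 < volume.real (Metric.ball (0 : En n) 1) :=
  ENNReal.toReal_pos (Metric.measure_ball_pos volume _ one_pos).ne'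
    Metric.isBounded_ball.measure_lt_top.ne

lemma weight_pos {n : ℕ} {s : ℝ} (hs : 0 < s) {Ω : Set (En n)} (ho : IsOpen Ω)
    (hb : IsBounded Ω) (hne : Ω.Nonempty) {x : En n} (hx : x ∉ closure Ω) :
    0 < ∫ y in Ω, (nsKer n s x y)⁻¹ := by
  obtain ⟨z, hz⟩ := hne
  obtain ⟨t, ht, hzt⟩ := Metric.isOpen_iff.1 ho z hz
  refine lt_of_lt_of_le ?_ (weight_lower hs ho hb hx ht hzt (R := dist x z + t) fun y hy => ?_)
  · have := volume_unitBall_pos n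
    have h1 : 0 < dist x z + t := by positivity
    have := Real.rpow_pos_of_pos h1 ((n : ℝ) + 2 * s)
    positivity
  · have := dist_triangle x z y
    rw [Metric.mem_ball'] at hy
    linarith

lemma continuousAt_weight {n : ℕ} {s : ℝ} (hs : 0 < s) {Ω : Set (En n)} (ho : IsOpen Ω)
    (hb : IsBounded Ω) {g : En n → ℝ} (hg : Continuous g) {x : En n} (hx : x ∉ closure Ω) :
    ContinuousAt (fun x => ∫ y in Ω, g y * (nsKer n s x y)⁻¹) x := by
  obtain ⟨d, hd, hdy⟩ := exists_dist_ge hx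
  obtain ⟨M, hM0, hM⟩ := exists_bound hb hg
  refine continuousAt_of_dominated (bound := fun _ => M * ((d / 2) ^ ((n : ℝ) + 2 * s))⁻¹)
    (Eventually.of_forall fun x =>
      (hg.measurable.mul (measurable_inv_nsKer n s x)).aestronglyMeasurable) ?_
    (integrableOn_const hb.measure_lt_top.ne) ?_
  · filter_upwards [Metric.ball_mem_nhds x (half_pos hd)] with w hw
    filter_upwards [ae_restrict_mem ho.measurableSet] with y hy
    rw [Real.norm_eq_abs, abs_mul, abs_of_nonneg (inv_nonneg.2 (nsKer_nonneg n s w y))]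
    refine mul_le_mul (hM y hy) (inv_nsKer_le hs (half_pos hd) ?_)
      (inv_nonneg.2 (nsKer_nonneg n s w y)) hM0
    have h1 := dist_triangle x w y
    have h2 := hdy y hy
    rw [Metric.mem_ball'] at hw
    linarith
  · filter_upwards [ae_restrict_mem ho.measurableSet] with y hy
    have h0 : 0 < dist x y := hd.trans_le (hdy y hy)
    unfold nsKer
    refine continuousAt_const.mul (ContinuousAt.inv₀ ?_ (Real.rpow_pos_of_pos h0 _).ne')
    exact (continuous_id.dist continuous_const).continuousAt.rpow_const (Or.inl h0.ne')

/-! ### Interior corkscrew condition -/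

lemma lastCoord_eq {n : ℕ} (hn : 0 < n) (x : En n) :
    lastCoord x = x ⟨n - 1, Nat.sub_lt hn Nat.one_pos⟩ := by
  simp [lastCoord, hn]

lemma norm_frontCoords_le {n : ℕ} (x : En n) : ‖frontCoords x‖ ≤ ‖x‖ := by
  rw [EuclideanSpace.norm_eq, EuclideanSpace.norm_eq]
  refine Real.sqrt_le_sqrt ?_
  have hinj : Function.Injective (Fin.castLE (Nat.sub_le n 1)) := Fin.castLE_injective _
  calc ∑ i, ‖frontCoords x i‖ ^ 2 = ∑ i, ‖x (Fin.castLE (Nat.sub_le n 1) i)‖ ^ 2 := rfl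
    _ = ∑ j ∈ Finset.univ.map ⟨_, hinj⟩, ‖x j‖ ^ 2 := by rw [Finset.sum_map]; rfl
    _ ≤ _ := Finset.sum_le_sum_of_subset_of_nonneg (Finset.subset_univ _)
        fun _ _ _ => by positivity

lemma continuous_frontCoords {n : ℕ} : Continuous (frontCoords : En n → _) := by
  unfold frontCoords
  exact (PiLp.continuous_toLp 2 _).comp (by fun_prop)

lemma continuous_lastCoord {n : ℕ} : Continuous (lastCoord : En n → ℝ) := by
  unfold lastCoord
  split_ifs <;> fun_prop

/-- Interior corkscrew condition at a boundary point of a `C¹` domain. -/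
lemma exists_corkscrew {n : ℕ} (hn : 0 < n) {Ω : Set (En n)} (hΩ : IsC1Domain n Ω) {p : En n}
    (hp : p ∈ frontier Ω) :
    ∃ κ > 0, ∃ r₀ > 0, ∀ ρ, 0 < ρ → ρ < r₀ →
      ∃ z, Metric.ball z (κ * ρ) ⊆ Ω ∩ Metric.ball p ρ := by
  obtain ⟨-, -, -, h⟩ := hΩ
  obtain ⟨φ, γ, r, hr, hγ, hφp, hset⟩ := h p hp
  have hmem : ∀ q, ‖φ q‖ < r → (q ∈ Ω ↔ lastCoord (φ q) < γ (frontCoords (φ q))) := by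
    intro q hq
    have h1 : φ q ∈ Metric.ball (0 : En n) r := by simpa using hq
    have h2 := Set.ext_iff.1 hset (φ q)
    simp only [Set.mem_inter_iff, h1, and_true, Set.mem_ofPred_eq] at h2
    rw [← h2, φ.injective.mem_set_image]
  have hf0 : frontCoords (0 : En n) = 0 := by
    have := norm_frontCoords_le (0 : En n)
    rw [norm_zero] at this
    exact norm_le_zero_iff.1 this
  have hl0 : lastCoord (0 : En n) = 0 := by simp [lastCoord]
  -- If `γ 0 < 0`, then `Ω` would miss a neighbourhood of `p`.
  have hγ0 : 0 ≤ γ 0 := by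
    by_contra! hneg
    have hc : Continuous fun q => lastCoord (φ q) - γ (frontCoords (φ q)) :=
      (continuous_lastCoord.comp φ.continuous).sub
        (hγ.continuous.comp (continuous_frontCoords.comp φ.continuous))
    have h1 : ∀ᶠ q in 𝓝 p, 0 < lastCoord (φ q) - γ (frontCoords (φ q)) := by
      refine hc.continuousAt.eventually_const_lt ?_
      simp only [hφp, hf0, hl0]; linarith
    have h2 : ∀ᶠ q in 𝓝 p, ‖φ q‖ < r := by
      refine φ.continuous.norm.continuousAt.eventually_lt_const ?_
      simpa only [hφp, norm_zero] using hr
    have h3 : ∃ᶠ q in 𝓝 p, q ∈ Ω := mem_closure_iff_frequently.1 (frontier_subset_closure hp)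
    obtain ⟨q, hq, hq1, hq2⟩ := (h3.and_eventually (h1.and h2)).exists
    have := (hmem q hq2).1 hq
    linarith
  obtain ⟨K, t, ht, hK⟩ := (hγ.contDiffAt (x := 0)).exists_lipschitzOnWith
  obtain ⟨r₁, hr₁, hball⟩ := Metric.mem_nhds_iff.1 ht
  have hK0 : (0 : ℝ) ≤ K := K.2
  refine ⟨1 / (2 * (K + 1)), by positivity, min r r₁, lt_min hr hr₁, fun ρ hρ hρr => ?_⟩
  set κ : ℝ := 1 / (2 * (K + 1)) with hκ
  have hκK : κ + K * κ = 1 / 2 := by rw [hκ]; field_simp; ring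
  have hκ2 : κ ≤ 1 / 2 := by
    have : 0 ≤ K * κ := by positivity
    linarith
  let j : Fin n := ⟨n - 1, Nat.sub_lt hn Nat.one_pos⟩
  let w : En n := EuclideanSpace.single j (-(ρ / 2))
  have hwn : ‖w‖ = ρ / 2 := by
    simp [w, abs_of_pos hρ]
  have hwf : frontCoords w = 0 := by
    ext i
    have : Fin.castLE (Nat.sub_le n 1) i ≠ j := by
      intro h
      have h1 := congrArg Fin.val h
      have h2 := i.2
      simp [j] at h1
      omega
    change w (Fin.castLE (Nat.sub_le n 1) i) = 0
    simp [w, this]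
  refine ⟨φ.symm w, fun q hq => ?_⟩
  have hqw : ‖φ q - w‖ < κ * ρ := by
    rw [Metric.mem_ball, ← φ.isometry.dist_eq, φ.apply_symm_apply, dist_eq_norm] at hq
    exact hq
  have hqn : ‖φ q‖ < ρ := by
    have h1 : ‖φ q‖ ≤ ‖φ q - w‖ + ‖w‖ := by simpa using norm_add_le (φ q - w) w
    nlinarith
  have hfront : ‖frontCoords (φ q)‖ ≤ κ * ρ := by
    have h1 : frontCoords (φ q) = frontCoords (φ q - w) + frontCoords w := by
      ext i
      change φ q _ = (φ q - w) _ + w _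
      simp
    rw [h1, hwf, add_zero]
    exact (norm_frontCoords_le _).trans hqw.le
  have hlast : lastCoord (φ q) < -(ρ / 2) + κ * ρ := by
    have h1 : ‖(φ q - w) j‖ ≤ ‖φ q - w‖ := PiLp.norm_apply_le _ _
    have h2 : (φ q - w) j = lastCoord (φ q) + ρ / 2 := by
      rw [lastCoord_eq hn]
      simp [w, j]
    rw [h2, Real.norm_eq_abs] at h1
    have := le_abs_self (lastCoord (φ q) + ρ / 2)
    linarith
  refine ⟨(hmem q (hqn.trans (hρr.trans_le (min_le_left _ _)))).2 ?_, ?_⟩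
  · have h1 : frontCoords (φ q) ∈ t := hball <| by
      rw [mem_ball_zero_iff]
      exact ((norm_frontCoords_le _).trans_lt hqn).trans (hρr.trans_le (min_le_right _ _))
    have h2 := hK.dist_le_mul _ h1 0 (hball (Metric.mem_ball_self hr₁))
    rw [dist_zero_right, Real.dist_eq] at h2
    have h3 := neg_abs_le (γ (frontCoords (φ q)) - γ 0)
    have h4 : K * ‖frontCoords (φ q)‖ ≤ K * (κ * ρ) := by gcongr
    have h5 : κ * ρ + K * (κ * ρ) = ρ / 2 := by
      rw [← mul_assoc, ← add_mul, hκK]; ring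
    linarith
  · rw [Metric.mem_ball, ← φ.isometry.dist_eq, hφp, dist_zero_right]
    exact hqn

/-! ### Blow-up of the weight and boundary continuity -/

/-- The total weight tends to infinity as a point outside `closure Ω` approaches
a boundary point `p`. -/
lemma weight_blowup {n : ℕ} (hn : 0 < n) {s : ℝ} (hs : 0 < s) {Ω : Set (En n)}
    (hΩ : IsC1Domain n Ω) {p : En n} (hp : p ∈ frontier Ω) (A : ℝ) :
    ∃ ρ > 0, ∀ x ∉ closure Ω, dist x p < ρ → A ≤ ∫ y in Ω, (nsKer n s x y)⁻¹ := by
  obtain ⟨κ, hκ, r₀, hr₀, hcork⟩ := exists_corkscrew hn hΩ hp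
  obtain ⟨ho, hb, -, -⟩ := hΩ
  set ω := volume.real (Metric.ball (0 : En n) 1)
  have hω : 0 < ω := volume_unitBall_pos n
  set c : ℝ := ((2 : ℝ) ^ ((n : ℝ) + 2 * s))⁻¹ * (κ ^ n * ω) with hc
  have hc0 : 0 < c := by positivity
  have hlim : Tendsto (fun ρ : ℝ => c * ρ ^ (-(2 * s))) (𝓝[>] 0) atTop :=
    (tendsto_rpow_neg_nhdsGT_zero (by linarith)).const_mul_atTop hc0
  have hsmall : ∀ᶠ ρ : ℝ in 𝓝[>] 0, ρ ∈ Ioo 0 r₀ := Ioo_mem_nhdsGT hr₀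
  obtain ⟨ρ, hA, hρ, hρr⟩ := ((hlim.eventually_ge_atTop A).and hsmall).exists
  refine ⟨ρ, hρ, fun x hx hxp => hA.trans ?_⟩
  obtain ⟨z, hz⟩ := hcork ρ hρ hρr
  have hkey := weight_lower hs ho hb hx (mul_pos hκ hρ) (fun y hy => (hz hy).1)
    (R := 2 * ρ) fun y hy => by
      have h1 := dist_triangle x p y
      have h2 := (hz hy).2
      rw [Metric.mem_ball'] at h2
      linarith
  refine le_of_eq_of_le ?_ hkey
  have h1 : ρ ^ (-(2 * s)) = (ρ ^ ((n : ℝ) + 2 * s))⁻¹ * ρ ^ n := by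
    rw [← Real.rpow_neg hρ.le, ← Real.rpow_natCast, ← Real.rpow_add hρ]
    congr 1; ring
  rw [h1, hc, Real.mul_rpow (by norm_num) hρ.le, mul_inv, mul_pow]
  ring

/-- Continuity of the weighted average at a boundary point, from the outside. -/
lemma average_near_frontier {n : ℕ} (hn : 0 < n) {s : ℝ} (hs : 0 < s) {Ω : Set (En n)}
    (hΩ : IsC1Domain n Ω) {v0 : En n → ℝ} (hv0 : Continuous v0) {p : En n}
    (hp : p ∈ frontier Ω) {ε : ℝ} (hε : 0 < ε) :
    ∃ ρ > 0, ∀ x ∉ closure Ω, dist x p < ρ →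
      |(∫ y in Ω, v0 y * (nsKer n s x y)⁻¹) / (∫ y in Ω, (nsKer n s x y)⁻¹) - v0 p| ≤ 2 * ε := by
  obtain ⟨ho, hb, hne, -⟩ := id hΩ
  have hg : Continuous fun y => v0 y - v0 p := hv0.sub continuous_const
  obtain ⟨M, hM0, hM⟩ := exists_bound hb hg
  obtain ⟨δ, hδ, hδv⟩ := Metric.continuousAt_iff.1 hv0.continuousAt ε hε
  -- `C` bounds the contribution of `Ω \ B(p, δ)` to the numerator.
  set C : ℝ := M * ((δ / 2) ^ ((n : ℝ) + 2 * s))⁻¹ with hC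
  have hC0 : 0 ≤ C := by positivity
  obtain ⟨ρ, hρ, hblow⟩ := weight_blowup hn hs hΩ hp (C * volume.real Ω / ε)
  refine ⟨min ρ (δ / 2), by positivity, fun x hx hxp => ?_⟩
  have hJ := weight_pos hs ho hb hne hx
  have hJA := hblow x hx (hxp.trans_le (min_le_left _ _))
  have hxδ := hxp.trans_le (min_le_right _ _)
  have hi1 := integrableOn_inv_nsKer hs ho hb hx
  set J := ∫ y in Ω, (nsKer n s x y)⁻¹ with hJdef
  have hnum : (∫ y in Ω, v0 y * (nsKer n s x y)⁻¹) - v0 p * J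
      = ∫ y in Ω, (v0 y - v0 p) * (nsKer n s x y)⁻¹ := by
    rw [hJdef, ← integral_const_mul, ← integral_sub (integrableOn_weight hs ho hb hv0 hx)
      (hi1.const_mul _)]
    simp only [sub_mul]
  have hbound : |∫ y in Ω, (v0 y - v0 p) * (nsKer n s x y)⁻¹| ≤ ε * J + C * volume.real Ω := by
    have hcint : IntegrableOn (fun _ : En n => C) Ω := integrableOn_const hb.measure_lt_top.ne
    have h1 : ∫ y in Ω, (ε * (nsKer n s x y)⁻¹ + C) = ε * J + C * volume.real Ω := by
      rw [integral_add (hi1.const_mul _) hcint, integral_const_mul, setIntegral_const,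
        smul_eq_mul, mul_comm C]
    rw [← h1, ← Real.norm_eq_abs]
    refine norm_integral_le_of_norm_le ((hi1.const_mul _).add hcint) ?_
    filter_upwards [ae_restrict_mem ho.measurableSet] with y hy
    have hk := inv_nonneg.2 (nsKer_nonneg n s x y)
    rw [Real.norm_eq_abs, abs_mul, abs_of_nonneg hk]
    by_cases hyp : dist y p < δ
    · have h2 := (hδv hyp).le
      rw [Real.dist_eq] at h2
      have := mul_le_mul_of_nonneg_right h2 hk
      linarith
    · have h2 : δ / 2 ≤ dist x y := by
        have := dist_triangle_left y p x
        linarith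
      have := mul_le_mul (hM y hy) (inv_nsKer_le hs (half_pos hδ) h2) hk hM0
      have := mul_nonneg hε.le hk
      linarith
  rw [div_sub' hJ.ne', abs_div, abs_of_pos hJ, div_le_iff₀ hJ, mul_comm J, hnum]
  rw [div_le_iff₀ hε] at hJA
  linarith

-- STATEMENT 16
theorem neumann_extension (n : ℕ) (hn : 0 < n) (s : ℝ) (hs : s ∈ Set.Ioo (0 : ℝ) 1)
    (Ω : Set (En n)) (hΩ : IsC1Domain n Ω)
    (v0 : En n → ℝ) (hv0 : Continuous v0) (v : En n → ℝ)
    (hv1 : ∀ x ∈ closure Ω, v x = v0 x)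
    (hv2 : ∀ x ∉ closure Ω,
      v x = (∫ y in Ω, v0 y / nsKer n s x y) / ∫ y in Ω, (nsKer n s x y)⁻¹) :
    Continuous v ∧ (∀ x ∈ closure Ω, v x = v0 x) ∧
    ∀ x ∉ closure Ω, NsD n s Ω v x = 0 := by
  have hs0 : 0 < s := hs.1
  obtain ⟨ho, hb, hne, -⟩ := id hΩ
  simp only [div_eq_mul_inv (v0 _)] at hv2
  refine ⟨continuous_iff_continuousAt.2 fun p => ?_, hv1, fun x hx => ?_⟩
  · by_cases hp : p ∈ closure Ω
    · by_cases hpi : p ∈ Ω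
      · refine hv0.continuousAt.congr ?_
        filter_upwards [ho.mem_nhds hpi] with x hx
        exact (hv1 x (subset_closure hx)).symm
      · have hpf : p ∈ frontier Ω := by rw [ho.frontier_eq]; exact ⟨hp, hpi⟩
        rw [Metric.continuousAt_iff]
        intro ε hε
        obtain ⟨ρ, hρ, hout⟩ := average_near_frontier hn hs0 hΩ hv0 hpf (ε := ε / 4)
          (by positivity)
        obtain ⟨δ, hδ, hin⟩ := Metric.continuousAt_iff.1 hv0.continuousAt ε hε
        refine ⟨min ρ δ, lt_min hρ hδ, fun {x} hx => ?_⟩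
        rw [hv1 p hp]
        by_cases hxc : x ∈ closure Ω
        · rw [hv1 x hxc]
          exact hin (hx.trans_le (min_le_right _ _))
        · rw [hv2 x hxc, Real.dist_eq]
          have := hout x hxc (hx.trans_le (min_le_left _ _))
          linarith
    · have h1 := continuousAt_weight hs0 ho hb hv0 hp
      have h2 := continuousAt_weight hs0 ho hb (g := fun _ => (1 : ℝ)) continuous_const hp
      simp only [one_mul] at h2
      refine (h1.div h2 (weight_pos hs0 ho hb hne hp).ne').congr ?_
      filter_upwards [isClosed_closure.isOpen_compl.mem_nhds hp] with x hx
      exact (hv2 x hx).symm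
  · have hJ := weight_pos hs0 ho hb hne hx
    have h1 : ∫ y in Ω, (v x - v y) / nsKer n s x y
        = ∫ y in Ω, (v x * (nsKer n s x y)⁻¹ - v0 y * (nsKer n s x y)⁻¹) := by
      refine setIntegral_congr_fun ho.measurableSet fun y hy => ?_
      simp only [hv1 y (subset_closure hy)]
      ring
    rw [NsD, h1, integral_sub ((integrableOn_inv_nsKer hs0 ho hb hx).const_mul _)
      (integrableOn_weight hs0 ho hb hv0 hx), integral_const_mul, hv2 x hx,
      div_mul_cancel₀ _ hJ.ne', sub_self, mul_zero]
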